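/- For every u ∈ U_0: Ẽ*_0 E_d u = c^{−d} q^{2d(1−d)} P(q^{2d−2}(q − q⁻¹)^{−2}) u. -/

import Mathlib

/-!
Write `K` for the operator acting on `U_i` as `q^(2i-d)`, so that `A = K + R` and
`A* = K + c K⁻¹ + L`. Since `A` and `A*` shift the summands `U_i` and `W_i` by at most one step,
there are Weyl-type relations between `A`, `A*` and each of `K`, `B`. They imply that
`Z = q² B K⁻¹ - K⁻¹ B - (q² - 1)` commutes with `A` (`zOp_comm`). On the other hand
`V*_0 + ⋯ + V*_i` equals both `U_0 + ⋯ + U_i` and `W_0 + ⋯ + W_i` (`split_flag`), and `K`, `B` have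
the same eigenvalue on top of this flag, so `Z` maps `U_i` into `V*_0 + ⋯ + V*_{i-1}` while
preserving `V_i + ⋯ + V_d`. These two spaces meet in zero (`split_disj`), hence `Z = 0`.

Put `ψ = B - K` and `N = A* - B - c K⁻¹`. Then `L = N + ψ`, and `Z = 0` gives `N ψ = q² ψ N`
(`N_psi`) as well as `ψ R = q² R ψ + (1 - q²)(1 - K²)` (`psi_R`). For `u ∈ U_0` the latter shows
that `ψ R^m u` is an explicit multiple of `R^(m-1) u`, starting from `ψ u = 0`. By the `q`-binomial
theorem (`N_pow`), `N^d = (L - ψ)^d` is a combination of the `L^i ψ^(d-i)`, so `N^d R^d u` is a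
combination of the `L^i R^i u = ζ_i u`; its value is, up to an explicit factor, the polynomial `P`
at the required point (`NR_pow`).

Finally, the projections are products of factors (operator minus eigenvalue) divided by a
difference product (`proj_chain`). The chain `R^n u` satisfies `(A - θ_n) R^n u = R^(n+1) u`, so
`E_d u` is `R^d u` divided by `D = ∏_{j<d} (θ_d - θ_j)`. Since `Ã* = K⁻¹ + c⁻¹ N` and
`K⁻¹ N = q² N K⁻¹`, the vectors `c⁻ⁿ Nⁿ R^d u` form a chain for `Ã*` with the same eigenvalue list,
so `Ẽ*_0 R^d u` is `c^(-d) N^d R^d u` divided by the same `D`. The value of `D²` is `denom_sq`.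
-/

noncomputable def qfac (𝕂 : Type*) [Field 𝕂] (q : 𝕂) : ℕ → 𝕂
  | 0 => 1
  | n + 1 => ((q ^ (n + 1) - q⁻¹ ^ (n + 1)) / (q - q⁻¹)) * qfac 𝕂 q n

/-! ### Flags and split decompositions -/

section Flags

variable {𝕂 : Type*} [Field 𝕂] {V : Type*} [AddCommGroup V] [Module 𝕂 V]

theorem le_lo {X : ℤ → Submodule 𝕂 V} (h0 : ∀ i : ℤ, i < 0 → X i = ⊥) {k m : ℤ} (h : k ≤ m) :
    X k ≤ ⨆ j ∈ Finset.Icc (0:ℤ) m, X j := by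
  by_cases hk : k < 0
  · rw [h0 k hk]; exact bot_le
  · exact le_iSup₂_of_le k (Finset.mem_Icc.2 ⟨by omega, h⟩) le_rfl

theorem le_up {X : ℤ → Submodule 𝕂 V} {d : ℤ} (hd : ∀ i : ℤ, d < i → X i = ⊥) {k m : ℤ}
    (h : m ≤ k) : X k ≤ ⨆ j ∈ Finset.Icc m d, X j := by
  by_cases hk : d < k
  · rw [hd k hk]; exact bot_le
  · exact le_iSup₂_of_le k (Finset.mem_Icc.2 ⟨h, by omega⟩) le_rfl

theorem lo_mono {X : ℤ → Submodule 𝕂 V} (h0 : ∀ i : ℤ, i < 0 → X i = ⊥) {k m : ℤ} (h : k ≤ m) :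
    (⨆ j ∈ Finset.Icc (0:ℤ) k, X j) ≤ ⨆ j ∈ Finset.Icc (0:ℤ) m, X j :=
  iSup₂_le fun _ hj => le_lo h0 ((Finset.mem_Icc.1 hj).2.trans h)

theorem up_anti {X : ℤ → Submodule 𝕂 V} {d : ℤ} (hd : ∀ i : ℤ, d < i → X i = ⊥) {k m : ℤ}
    (h : m ≤ k) : (⨆ j ∈ Finset.Icc k d, X j) ≤ ⨆ j ∈ Finset.Icc m d, X j :=
  iSup₂_le fun _ hj => le_up hd (h.trans (Finset.mem_Icc.1 hj).1)

theorem sup_empty {X : ℤ → Submodule 𝕂 V} {a b : ℤ} (h : b < a) :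
    (⨆ j ∈ Finset.Icc a b, X j) = ⊥ := by
  rw [Finset.Icc_eq_empty (by omega)]; simp

theorem mem_of_gen {s : Finset ℤ} {X : ℤ → Submodule 𝕂 V} {Y : Submodule 𝕂 V}
    (S : Module.End 𝕂 V) (h : ∀ j ∈ s, ∀ v ∈ X j, S v ∈ Y) {v : V}
    (hv : v ∈ ⨆ j ∈ s, X j) : S v ∈ Y := by
  have : (⨆ j ∈ s, X j) ≤ Y.comap S := iSup₂_le fun j hj v hv => h j hj v hv
  exact this hv

theorem lo_step {X : ℤ → Submodule 𝕂 V} (h0 : ∀ i : ℤ, i < 0 → X i = ⊥) (S : Module.End 𝕂 V)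
    (hS : ∀ i : ℤ, Submodule.map S (X i) ≤ X (i-1) ⊔ X i ⊔ X (i+1)) {m m' : ℤ} (hm : m' = m + 1)
    {v : V} (hv : v ∈ ⨆ j ∈ Finset.Icc (0:ℤ) m, X j) :
    S v ∈ ⨆ j ∈ Finset.Icc (0:ℤ) m', X j := by
  refine mem_of_gen S (fun j hj w hw => ?_) hv
  have hj := Finset.mem_Icc.1 hj
  exact (sup_le (sup_le (le_lo h0 (by omega)) (le_lo h0 (by omega))) (le_lo h0 (by omega)))
    (hS j (Submodule.mem_map_of_mem hw))

theorem up_step {X : ℤ → Submodule 𝕂 V} {d : ℤ} (hd : ∀ i : ℤ, d < i → X i = ⊥)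
    (S : Module.End 𝕂 V)
    (hS : ∀ i : ℤ, Submodule.map S (X i) ≤ X (i-1) ⊔ X i ⊔ X (i+1)) {m m' : ℤ} (hm : m' = m - 1)
    {v : V} (hv : v ∈ ⨆ j ∈ Finset.Icc m d, X j) :
    S v ∈ ⨆ j ∈ Finset.Icc m' d, X j := by
  refine mem_of_gen S (fun j hj w hw => ?_) hv
  have hj := Finset.mem_Icc.1 hj
  exact (sup_le (sup_le (le_up hd (by omega)) (le_up hd (by omega))) (le_up hd (by omega)))
    (hS j (Submodule.mem_map_of_mem hw))

/-- If `S` acts on `X m` as `ν m`, then `S - ν m` moves the partial sum `X 0 + ⋯ + X m` one step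
down. -/
theorem lo_drop {X : ℤ → Submodule 𝕂 V} (h0 : ∀ i : ℤ, i < 0 → X i = ⊥) (S : Module.End 𝕂 V)
    {ν : ℤ → 𝕂} (hS : ∀ i : ℤ, ∀ v ∈ X i, S v = ν i • v) {m m' : ℤ} (hm : m' = m - 1)
    {v : V} (hv : v ∈ ⨆ j ∈ Finset.Icc (0:ℤ) m, X j) :
    S v - ν m • v ∈ ⨆ j ∈ Finset.Icc (0:ℤ) m', X j := by
  refine mem_of_gen (S - ν m • 1) (fun j hj w hw => ?_) hv
  have hj := Finset.mem_Icc.1 hj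
  have e : (S - ν m • (1 : Module.End 𝕂 V)) w = (ν j - ν m) • w := by
    simp [hS j w hw, sub_smul]
  rw [e]
  rcases eq_or_lt_of_le hj.2 with rfl | hlt
  · simp
  · exact Submodule.smul_mem _ _ (le_lo h0 (by omega) hw)

theorem up_drop {X : ℤ → Submodule 𝕂 V} {d : ℤ} (hd : ∀ i : ℤ, d < i → X i = ⊥)
    (S : Module.End 𝕂 V)
    {ν : ℤ → 𝕂} (hS : ∀ i : ℤ, ∀ v ∈ X i, S v = ν i • v) {m m' : ℤ} (hm : m' = m + 1)
    {v : V} (hv : v ∈ ⨆ j ∈ Finset.Icc m d, X j) :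
    S v - ν m • v ∈ ⨆ j ∈ Finset.Icc m' d, X j := by
  refine mem_of_gen (S - ν m • 1) (fun j hj w hw => ?_) hv
  have hj := Finset.mem_Icc.1 hj
  have e : (S - ν m • (1 : Module.End 𝕂 V)) w = (ν j - ν m) • w := by
    simp [hS j w hw, sub_smul]
  rw [e]
  rcases eq_or_lt_of_le hj.1 with rfl | hlt
  · simp
  · exact Submodule.smul_mem _ _ (le_up hd (by omega) hw)

/-- Opposite flags `F` (increasing) and `G` (decreasing) whose intersections `X i = F i ⊓ G i` are
eigenspaces of one operator `T` meet trivially one step apart: an element of `F i ⊓ G (i + 1)` lies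
in both `X i` and `X (i + 1)`, on which `T` acts by different scalars. -/
theorem split_disj {F G X : ℤ → Submodule 𝕂 V} (hF : ∀ i, F i ≤ F (i+1)) (hG : ∀ i, G (i+1) ≤ G i)
    (hX : ∀ i, X i = F i ⊓ G i) (T : Module.End 𝕂 V) {μ : ℤ → 𝕂}
    (hT : ∀ i, ∀ v ∈ X i, T v = μ i • v) (hμ : ∀ i, μ (i+1) ≠ μ i) {i : ℤ} {v : V}
    (h1 : v ∈ F i) (h2 : v ∈ G (i+1)) : v = 0 := by
  have e1 := hT i v (by rw [hX]; exact ⟨h1, hG i h2⟩)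
  have e2 := hT (i+1) v (by rw [hX]; exact ⟨hF i h1, h2⟩)
  have e3 : (μ (i+1) - μ i) • v = 0 := by rw [sub_smul, ← e1, ← e2, sub_self]
  exact (smul_eq_zero.1 e3).resolve_left (sub_ne_zero.2 (hμ i))

/-- If moreover the `X i` span `V`, the increasing flag is recovered from them. -/
theorem split_flag {F G X : ℤ → Submodule 𝕂 V} (hF : ∀ i, F i ≤ F (i+1))
    (hG : ∀ i j, i ≤ j → G j ≤ G i)
    (hX : ∀ i, X i = F i ⊓ G i) (T : Module.End 𝕂 V) {μ : ℤ → 𝕂}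
    (hT : ∀ i, ∀ v ∈ X i, T v = μ i • v) (hμ : ∀ i, μ (i+1) ≠ μ i) {d : ℤ}
    (htot : (⨆ i ∈ Finset.Icc (0:ℤ) d, X i) = ⊤) (hF' : ∀ i j, i ≤ j → F i ≤ F j) (i : ℤ) :
    F i = ⨆ j ∈ Finset.Icc (0:ℤ) i, X j := by
  apply le_antisymm
  · intro x hx
    have ht : (⊤ : Submodule 𝕂 V) ≤ (⨆ j ∈ Finset.Icc (0:ℤ) i, X j) ⊔ G (i+1) := by
      rw [← htot]
      refine iSup₂_le fun j hj => ?_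
      have hj := Finset.mem_Icc.1 hj
      by_cases h : j ≤ i
      · exact le_sup_of_le_left (le_iSup₂_of_le j (Finset.mem_Icc.2 ⟨hj.1, h⟩) le_rfl)
      · refine le_sup_of_le_right ?_
        rw [hX]
        exact inf_le_right.trans (hG _ _ (by omega))
    obtain ⟨a, ha, b, hb, rfl⟩ := Submodule.mem_sup.1 (ht (Submodule.mem_top (x := x)))
    have haF : a ∈ F i := by
      have : (⨆ j ∈ Finset.Icc (0:ℤ) i, X j) ≤ F i := by
        refine iSup₂_le fun j hj => ?_
        rw [hX]
        exact inf_le_left.trans (hF' _ _ (Finset.mem_Icc.1 hj).2)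
      exact this ha
    have hbF : b ∈ F i := by simpa using (F i).sub_mem hx haF
    have : b = 0 := split_disj hF (fun i => hG _ _ (by omega)) hX T hT hμ hbF hb
    simpa [this] using ha
  · refine iSup₂_le fun j hj => ?_
    rw [hX]
    exact inf_le_left.trans (hF' _ _ (Finset.mem_Icc.1 hj).2)

theorem eq_on_sum {s : Finset ℤ} {X : ℤ → Submodule 𝕂 V} (htot : (⨆ i ∈ s, X i) = ⊤)
    (f g : Module.End 𝕂 V) (h : ∀ i ∈ s, ∀ v ∈ X i, f v = g v) : f = g := by
  have : (⊤ : Submodule 𝕂 V) ≤ LinearMap.eqLocus f g := by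
    rw [← htot]; exact iSup₂_le fun i hi v hv => h i hi v hv
  exact LinearMap.ext fun v => this (Submodule.mem_top (x := v))

end Flags

/-! ### Eigenprojections -/

section Projection

variable {𝕂 : Type*} [Field 𝕂] {V : Type*} [AddCommGroup V] [Module 𝕂 V]

/-- The operator `(S - μ (n-1)) ⋯ (S - μ 0)`. -/
def tauOp (S : Module.End 𝕂 V) (μ : ℕ → 𝕂) : ℕ → Module.End 𝕂 V
  | 0 => 1
  | n + 1 => (S - μ n • 1) * tauOp S μ n

theorem tauOp_eig (S : Module.End 𝕂 V) (μ : ℕ → 𝕂) {t : 𝕂} {v : V} (h : S v = t • v) (n : ℕ) :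
    tauOp S μ n v = (∏ j ∈ Finset.range n, (t - μ j)) • v := by
  induction n with
  | zero => simp [tauOp]
  | succ n ih =>
    rw [tauOp, Module.End.mul_apply, ih, Finset.prod_range_succ]
    simp only [LinearMap.sub_apply, LinearMap.smul_apply, Module.End.one_apply, map_smul, h]
    module

theorem tauOp_chain (S : Module.End 𝕂 V) (μ : ℕ → 𝕂) (x : ℕ → V)
    (h : ∀ n, S (x n) = μ n • x n + x (n+1)) (n : ℕ) : tauOp S μ n (x 0) = x n := by
  induction n with
  | zero => simp [tauOp]
  | succ n ih =>
    rw [tauOp, Module.End.mul_apply, ih]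
    simp [h n]

/-- An eigenprojection along a chain. For `S` diagonalizable with eigenvalues `μ 0, …, μ d` and `E`
the projection onto the last eigenspace, `(S - μ 0) ⋯ (S - μ (d-1))` equals `E` times
`∏_{j<d} (μ d - μ j)`, while it carries `x 0` to `x d` whenever `(S - μ n) (x n) = x (n+1)`. The
hypothesis `htop` says that the eigenspaces span. -/
theorem proj_chain (S E : Module.End 𝕂 V) (μ : ℕ → 𝕂) {d : ℕ} (X : ℕ → Submodule 𝕂 V)
    (htop : ∀ f g : Module.End 𝕂 V, (∀ j ≤ d, ∀ v ∈ X j, f v = g v) → f = g)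
    (hS : ∀ j ≤ d, ∀ v ∈ X j, S v = μ j • v)
    (hE1 : ∀ v ∈ X d, E v = v) (hE0 : ∀ j < d, ∀ v ∈ X j, E v = 0) (x : ℕ → V)
    (h : ∀ n, S (x n) = μ n • x n + x (n+1)) :
    (∏ j ∈ Finset.range d, (μ d - μ j)) • E (x 0) = x d := by
  have key : tauOp S μ d = (∏ j ∈ Finset.range d, (μ d - μ j)) • E := by
    apply htop
    intro j hj v hv
    rw [tauOp_eig S μ (hS j hj v hv) d, LinearMap.smul_apply]
    rcases eq_or_lt_of_le hj with rfl | hlt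
    · rw [hE1 v hv]
    · rw [hE0 j hlt v hv, smul_zero, Finset.prod_eq_zero (Finset.mem_range.2 hlt) (sub_self _),
        zero_smul]
  rw [← tauOp_chain S μ x h d, key, LinearMap.smul_apply]

end Projection

/-! ### Identities for `q`-factorials -/

section QNumbers

variable {𝕂 : Type*} [Field 𝕂]

theorem qsub_ne {q : 𝕂} (hq0 : q ≠ 0) (hqru : ∀ n : ℕ, 0 < n → q ^ n ≠ 1) (n : ℕ) :
    q ^ (n+1) - q⁻¹ ^ (n+1) ≠ 0 := by
  intro h
  apply hqru (2*(n+1)) (by omega)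
  have : q ^ (n+1) * (q ^ (n+1) - q⁻¹ ^ (n+1)) = 0 := by rw [h, mul_zero]
  rw [inv_pow, mul_sub, mul_inv_cancel₀ (pow_ne_zero _ hq0)] at this
  rw [two_mul, pow_add]
  exact sub_eq_zero.1 this

theorem qfac_ne {q : 𝕂} (hq0 : q ≠ 0) (hqru : ∀ n : ℕ, 0 < n → q ^ n ≠ 1) (n : ℕ) :
    qfac 𝕂 q n ≠ 0 := by
  induction n with
  | zero => simp [qfac]
  | succ n ih =>
    have h1 := qsub_ne hq0 hqru 0
    simp only [zero_add, pow_one] at h1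
    exact mul_ne_zero (div_ne_zero (qsub_ne hq0 hqru n) h1) ih

/-- `[i]! ∏_{j<k} (q - q⁻¹)[i+j+1] = (q - q⁻¹)^k [i+k]!`. -/
theorem prod_qsub {q : 𝕂} (he : q - q⁻¹ ≠ 0) (i k : ℕ) :
    qfac 𝕂 q i * ∏ j ∈ Finset.range k, (q ^ (i+j+1) - q⁻¹ ^ (i+j+1)) =
      (q - q⁻¹) ^ k * qfac 𝕂 q (i+k) := by
  induction k with
  | zero => simp
  | succ k ih =>
    rw [Finset.prod_range_succ, ← mul_assoc, ih, ← add_assoc, qfac, pow_succ]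
    set e := q - q⁻¹
    field_simp
    ring

/-- The square of `∏_{j<d} (q^d - q^{2j-d})`, the common denominator of both projections. -/
theorem denom_sq {q : 𝕂} (hq0 : q ≠ 0) (he : q - q⁻¹ ≠ 0) (d : ℕ) :
    (∏ j ∈ Finset.range d, (q ^ (2*(d:ℤ) - d) - q ^ (2*(j:ℤ) - d))) ^ 2 =
      q ^ ((d:ℤ)*(d-1)) * (q - q⁻¹) ^ (2*d) * (qfac 𝕂 q d) ^ 2 := by
  have h1 : ∏ j ∈ Finset.range d, (q ^ (2*(d:ℤ) - d) - q ^ (2*(j:ℤ) - d)) =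
      (∏ j ∈ Finset.range d, q ^ j) * ∏ j ∈ Finset.range d, (q ^ (0+j+1) - q⁻¹ ^ (0+j+1)) := by
    rw [← Finset.prod_range_reflect (fun j => (q ^ (0+j+1) - q⁻¹ ^ (0+j+1))),
      ← Finset.prod_mul_distrib]
    refine Finset.prod_congr rfl fun j hj => ?_
    have hj := Finset.mem_range.1 hj
    obtain ⟨m, rfl⟩ : ∃ m, d = j + m + 1 := ⟨d - j - 1, by omega⟩
    have : 0 + (j + m + 1 - 1 - j) + 1 = m + 1 := by omega
    rw [this, inv_pow, mul_sub, ← pow_add, ← zpow_natCast, ← zpow_natCast, ← zpow_natCast,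
      ← zpow_neg, ← zpow_add₀ hq0]
    congr 2 <;> push_cast <;> ring
  have h2 : (∏ j ∈ Finset.range d, q ^ j) ^ 2 = q ^ ((d:ℤ)*(d-1)) := by
    rw [Finset.prod_pow_eq_pow_sum, ← pow_mul, Finset.sum_range_id_mul_two, ← zpow_natCast]
    congr 1
    rcases d with _ | d
    · simp
    · push_cast; simp
  have h3 := prod_qsub he 0 d
  simp only [qfac, one_mul, zero_add] at h3
  rw [h1, mul_pow, h2]
  simp only [zero_add]
  rw [h3]; ring

/-- The coefficient of `L^i ψ^k` in the normally ordered expansion of `(L - ψ)^(i+k)`; a signed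
`q`-binomial coefficient. -/
noncomputable def bcoef (q : 𝕂) (i k : ℕ) : 𝕂 :=
  (-1) ^ k * q ^ (-((k:ℤ) * (i + k - 1))) * qfac 𝕂 q (i+k) / (qfac 𝕂 q i * qfac 𝕂 q k)

theorem bcoef_zero_right {q : 𝕂} (hf : ∀ n, qfac 𝕂 q n ≠ 0) (i : ℕ) : bcoef q i 0 = 1 := by
  have := hf i
  simp [bcoef, qfac, this]

theorem bcoef_zero_left {q : 𝕂} (hq0 : q ≠ 0) (hf : ∀ n, qfac 𝕂 q n ≠ 0) (k : ℕ) :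
    bcoef q 0 (k+1) = - q ^ (-(2*(k:ℤ))) * bcoef q 0 k := by
  have h1 := hf k
  have h2 := hf (k+1)
  have h0 : qfac 𝕂 q 0 = 1 := rfl
  simp only [bcoef, h0, zero_add, one_mul, mul_div_assoc, div_self h1, div_self h2, pow_succ]
  have : q ^ (-(((k+1:ℕ):ℤ) * (((0:ℕ):ℤ) + ((k+1:ℕ):ℤ) - 1)))
      = q ^ (-(2*(k:ℤ))) * q ^ (-((k:ℤ) * (((0:ℕ):ℤ) + k - 1))) := by
    rw [← zpow_add₀ hq0]; congr 1; push_cast; ring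
  rw [this]; ring

/-- The `q`-Pascal rule. -/
theorem bcoef_succ {q : 𝕂} (hq0 : q ≠ 0) (he : q - q⁻¹ ≠ 0) (hf : ∀ n, qfac 𝕂 q n ≠ 0)
    (i k : ℕ) :
    bcoef q (i+1) (k+1) =
      bcoef q i (k+1) - q ^ (-(2*((i:ℤ)+k+1))) * bcoef q (i+1) k := by
  have hi := hf i
  have hk := hf k
  have hi' := hf (i+1)
  have hk' := hf (k+1)
  have hn := hf (i+k+1)
  have e1 : i + 1 + (k+1) = (i+k+1)+1 := by omega
  have e2 : i + (k+1) = i+k+1 := by omega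
  have e3 : i + 1 + k = i+k+1 := by omega
  simp only [bcoef, e1, e2, e3]
  rw [show qfac 𝕂 q (i+k+1+1) =
    ((q ^ (i+k+1 + 1) - q⁻¹ ^ (i+k+1 + 1)) / (q - q⁻¹)) * qfac 𝕂 q (i+k+1) from rfl]
  set f := qfac 𝕂 q (i+k+1)
  -- All exponents are expressed through `x = q^i`, `y = q^k` and the common power `Q`.
  set Q : 𝕂 := q ^ (-((k:ℤ) * (i + k)))
  have hQ : Q ≠ 0 := zpow_ne_zero _ hq0
  have hx : q ^ i ≠ 0 := pow_ne_zero _ hq0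
  have hy : q ^ k ≠ 0 := pow_ne_zero _ hq0
  have z1 : q ^ (-(((k+1:ℕ):ℤ) * (((i+1:ℕ):ℤ) + ((k+1:ℕ):ℤ) - 1)))
      = Q * ((q ^ i)⁻¹ * (q ^ k)⁻¹ * (q ^ k)⁻¹ * q⁻¹) := by
    rw [← zpow_natCast, ← zpow_natCast, ← zpow_neg, ← zpow_neg, ← zpow_neg_one]
    simp only [← zpow_add₀ hq0, Q]
    congr 1; push_cast; ring
  have z2 : q ^ (-(((k+1:ℕ):ℤ) * ((i:ℤ) + ((k+1:ℕ):ℤ) - 1)))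
      = Q * ((q ^ i)⁻¹ * (q ^ k)⁻¹) := by
    rw [← zpow_natCast, ← zpow_natCast, ← zpow_neg, ← zpow_neg]
    simp only [← zpow_add₀ hq0, Q]
    congr 1; push_cast; ring
  have z3 : q ^ (-((k:ℤ) * (((i+1:ℕ):ℤ) + (k:ℤ) - 1))) = Q := by
    simp only [Q]; congr 1; push_cast; ring
  have z4 : q ^ (-(2*((i:ℤ)+k+1))) = ((q ^ i)⁻¹ * (q ^ k)⁻¹ * q⁻¹) ^ 2 := by
    rw [sq, ← zpow_natCast, ← zpow_natCast, ← zpow_neg, ← zpow_neg, ← zpow_neg_one]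
    simp only [← zpow_add₀ hq0]
    congr 1; push_cast; ring
  rw [z1, z2, z3, z4]
  rw [show qfac 𝕂 q (i+1) = ((q ^ (i + 1) - q⁻¹ ^ (i + 1)) / (q - q⁻¹)) * qfac 𝕂 q i from rfl]
    at hi' ⊢
  rw [show qfac 𝕂 q (k+1) = ((q ^ (k + 1) - q⁻¹ ^ (k + 1)) / (q - q⁻¹)) * qfac 𝕂 q k from rfl]
    at hk' ⊢
  have si := (div_ne_zero_iff.1 (mul_ne_zero_iff.1 hi').1).1
  have sk := (div_ne_zero_iff.1 (mul_ne_zero_iff.1 hk').1).1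
  simp only [inv_pow, pow_succ, pow_add, pow_zero, one_mul] at si sk ⊢
  set x := q ^ i
  set y := q ^ k
  set e := q - q⁻¹
  have a1 : (-1:𝕂)^k * -1 = -(-1)^k := by ring
  rw [a1]
  set s := (-1:𝕂)^k
  set fi := qfac 𝕂 q i
  set fk := qfac 𝕂 q k
  set m := x * q - x⁻¹ * q⁻¹ with hm
  set n := y * q - y⁻¹ * q⁻¹ with hnn
  field_simp
  rw [hm, hnn]
  field_simp
  ring

/-- The scalar by which `ψ` sends `R^m u` to `R^(m-1) u`. -/
def acoef (q : 𝕂) (d : ℤ) (m : ℕ) : 𝕂 := (1 - q ^ (2*m)) * (1 - q ^ (2*(m:ℤ) - 2*d - 2))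

/-- The scalar by which `ψ^k` sends `R^(i+k) u` to `R^i u` when `d = i + k`, multiplied by `[i]!`.
-/
theorem prod_acoef {q : 𝕂} (hq0 : q ≠ 0) (he : q - q⁻¹ ≠ 0) (i k : ℕ) :
    qfac 𝕂 q i * ∏ j ∈ Finset.range k, acoef q ((i + k : ℕ) : ℤ) (i+j+1) =
      (-1) ^ k * q ^ (i*k) * (q - q⁻¹) ^ (2*k) * qfac 𝕂 q (i+k) * qfac 𝕂 q k := by
  have h1 : ∏ j ∈ Finset.range k, acoef q ((i + k : ℕ) : ℤ) (i+j+1) =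
      (∏ j ∈ Finset.range k, (-q ^ (i+(j+1)) * (q ^ (i+j+1) - q⁻¹ ^ (i+j+1)))) *
      ∏ j ∈ Finset.range k, (q⁻¹ ^ (j+1) * (q ^ (0+j+1) - q⁻¹ ^ (0+j+1))) := by
    rw [← Finset.prod_range_reflect
      (fun j => (q⁻¹ ^ (j+1) * (q ^ (0+j+1) - q⁻¹ ^ (0+j+1)))), ← Finset.prod_mul_distrib]
    refine Finset.prod_congr rfl fun j hj => ?_
    have hj := Finset.mem_range.1 hj
    obtain ⟨m, rfl⟩ : ∃ m, k = j + m + 1 := ⟨k - j - 1, by omega⟩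
    have t : j + m + 1 - 1 - j = m := by omega
    have z : q ^ (2*((i+j+1:ℕ):ℤ) - 2*((i + (j+m+1) : ℕ):ℤ) - 2) = q⁻¹ ^ (m+1) * q⁻¹ ^ (m+1) := by
      rw [← pow_add, inv_pow, ← zpow_natCast, ← zpow_neg]
      congr 1; push_cast; ring
    have z1 : q ^ (m+1) * q⁻¹ ^ (m+1) = 1 := by
      rw [← mul_pow, mul_inv_cancel₀ hq0, one_pow]
    have z2 : q ^ (i+j+1) * q⁻¹ ^ (i+j+1) = 1 := by
      rw [← mul_pow, mul_inv_cancel₀ hq0, one_pow]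
    rw [acoef, z, t, zero_add, two_mul (i+j+1), pow_add, ← add_assoc i j 1]
    set x := q ^ (i+j+1)
    set x' := q⁻¹ ^ (i+j+1)
    set y := q ^ (m+1)
    set y' := q⁻¹ ^ (m+1)
    linear_combination (-(y'*y - y'*y')) * z2 - (1 - x*x) * z1
  have h2 : ∏ j ∈ Finset.range k, (q ^ (j+1)) * q⁻¹ ^ (j+1) = (1:𝕂) := by
    refine Finset.prod_eq_one fun j _ => ?_
    rw [← mul_pow, mul_inv_cancel₀ hq0, one_pow]
  have h3 := prod_qsub he 0 k
  have h4 := prod_qsub he i k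
  simp only [qfac, one_mul, zero_add] at h3
  rw [h1]
  have h5 : ∏ j ∈ Finset.range k, -q ^ (i+(j+1)) =
      (-1) ^ k * q ^ (i*k) * ∏ j ∈ Finset.range k, q ^ (j+1) := by
    rw [pow_mul, ← mul_pow, ← Finset.card_range k, ← Finset.prod_const, Finset.card_range,
      ← Finset.prod_mul_distrib]
    refine Finset.prod_congr rfl fun j _ => ?_
    rw [pow_add]; ring
  rw [Finset.prod_mul_distrib] at h2
  simp only [Finset.prod_mul_distrib, h5, zero_add]
  rw [h3]
  linear_combination ((-1) ^ k * q ^ (i*k) * (q - q⁻¹)^k * qfac 𝕂 q k) * h4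
    * (∏ j ∈ Finset.range k, q ^ (j+1)) * ∏ j ∈ Finset.range k, q⁻¹ ^ (j+1)
    + ((-1) ^ k * q ^ (i*k) * (q - q⁻¹)^k * qfac 𝕂 q k) * ((q - q⁻¹) ^ k * qfac 𝕂 q (i+k)) * h2

end QNumbers

/-! ### The expansion of `N^d R^d` on `U_0` -/

section Expansion

variable {𝕂 : Type*} [Field 𝕂] {V : Type*} [AddCommGroup V] [Module 𝕂 V]

theorem pow_comm_psi {q : 𝕂} (hq0 : q ≠ 0) (N ψ : Module.End 𝕂 V)
    (hNψ : ∀ v, N (ψ v) = q^2 • ψ (N v)) (n : ℕ) (v : V) :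
    ψ ((N ^ n) v) = q ^ (-(2*(n:ℤ))) • (N ^ n) (ψ v) := by
  induction n generalizing v with
  | zero => simp
  | succ n ih =>
    have e : ψ (N v) = q ^ (-(2:ℤ)) • N (ψ v) := by
      rw [hNψ, smul_smul, ← zpow_natCast, ← zpow_add₀ hq0]; simp
    rw [pow_succ, Module.End.mul_apply, ih, e, map_smul, smul_smul, Module.End.mul_apply,
      ← zpow_add₀ hq0]
    congr 2; push_cast; ring

/-- A `q`-binomial theorem: if `L = N + ψ` with `N ψ = q² ψ N`, then `N^n = (L - ψ)^n` expands
with all powers of `L` on the left. The recursion is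
`N^(n+1) = L N^n - ψ N^n = L N^n - q^(-2n) N^n ψ`. -/
theorem N_pow {q : 𝕂} (hq0 : q ≠ 0) (he : q - q⁻¹ ≠ 0) (hf : ∀ n, qfac 𝕂 q n ≠ 0)
    (L N ψ : Module.End 𝕂 V)
    (hL : ∀ v, L v = N v + ψ v) (hNψ : ∀ v, N (ψ v) = q^2 • ψ (N v)) (n : ℕ) (v : V) :
    (N ^ n) v = ∑ p ∈ Finset.HasAntidiagonal.antidiagonal n,
      bcoef q p.1 p.2 • (L ^ p.1) ((ψ ^ p.2) v) := by
  induction n generalizing v with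
  | zero => simp [bcoef_zero_right hf]
  | succ n ih =>
    have e : (N ^ (n+1)) v = L ((N ^ n) v) - q ^ (-(2*(n:ℤ))) • (N ^ n) (ψ v) := by
      rw [← pow_comm_psi hq0 N ψ hNψ, hL, pow_succ', Module.End.mul_apply, add_sub_cancel_right]
    rw [e, ih, ih]
    let g : ℕ × ℕ → V := fun p => match p with
      | (0, _) => 0
      | (i+1, k) => bcoef q i k • (L ^ (i+1)) ((ψ ^ k) v)
    let h : ℕ × ℕ → V := fun p => match p with
      | (_, 0) => 0
      | (i, k+1) => -(q ^ (-(2*(n:ℤ))) * bcoef q i k) • (L ^ i) ((ψ ^ (k+1)) v)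
    have key : ∀ p ∈ Finset.HasAntidiagonal.antidiagonal (n+1),
        bcoef q p.1 p.2 • (L ^ p.1) ((ψ ^ p.2) v) = g p + h p := by
      rintro ⟨i, k⟩ hp
      have hp := Finset.HasAntidiagonal.mem_antidiagonal.1 hp
      simp only at hp
      rcases i with _ | i <;> rcases k with _ | k
      · omega
      · obtain rfl : k = n := by omega
        simp only [g, h, zero_add]
        rw [bcoef_zero_left hq0 hf]
        congr 1; ring
      · simp only [g, h, add_zero]
        rw [bcoef_zero_right hf, bcoef_zero_right hf]
      · obtain rfl : n = i + k + 1 := by omega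
        simp only [g, h]
        rw [bcoef_succ hq0 he hf, sub_eq_add_neg, add_smul]
        push_cast; rfl
    rw [Finset.sum_congr rfl key, Finset.sum_add_distrib, Finset.Nat.sum_antidiagonal_succ,
      Finset.Nat.sum_antidiagonal_succ', sub_eq_add_neg, Finset.smul_sum, ← Finset.sum_neg_distrib,
      map_sum]
    simp only [g, h, zero_add]
    congr 1
    · refine Finset.sum_congr rfl fun p _ => ?_
      rw [map_smul, pow_succ', Module.End.mul_apply]
    · refine Finset.sum_congr rfl fun p _ => ?_
      rw [smul_smul, neg_smul, pow_succ, Module.End.mul_apply]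

theorem psi_pow {q : 𝕂} {d : ℤ} (R ψ : Module.End 𝕂 V) (u : V)
    (h : ∀ m : ℕ, ψ ((R ^ (m+1)) u) = acoef q d (m+1) • (R ^ m) u) (i k : ℕ) :
    (ψ ^ k) ((R ^ (i+k)) u) = (∏ j ∈ Finset.range k, acoef q d (i+j+1)) • (R ^ i) u := by
  induction k with
  | zero => simp
  | succ k ih =>
    rw [pow_succ, Module.End.mul_apply, ← add_assoc, h, map_smul, ih, smul_smul,
      Finset.prod_range_succ, mul_comm]

/-- On `u ∈ U_0` the operator `N^d R^d` is the scalar `∑_i bcoef q i (d-i) * ζ_i * (ψ-weight)`, which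
is the value of `P` times `q^(2d(1-d))` and the squared denominator of `denom_sq`. -/
theorem NR_pow {q : 𝕂} (hq0 : q ≠ 0) (he : q - q⁻¹ ≠ 0) (hf : ∀ n, qfac 𝕂 q n ≠ 0)
    (R L N ψ : Module.End 𝕂 V)
    (hL : ∀ v, L v = N v + ψ v) (hNψ : ∀ v, N (ψ v) = q^2 • ψ (N v)) (d : ℕ) (u : V)
    (h : ∀ m : ℕ, ψ ((R ^ (m+1)) u) = acoef q d (m+1) • (R ^ m) u) (ζ : ℕ → 𝕂)
    (hζ : ∀ i ≤ d, (L ^ i) ((R ^ i) u) = ζ i • u) :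
    (N ^ d) ((R ^ d) u) = ((q ^ ((d:ℤ)*(d-1)) * (q - q⁻¹) ^ (2*d) * (qfac 𝕂 q d) ^ 2) *
      (q ^ (2*(d:ℤ)*(1 - d)) * (∑ i ∈ Finset.range (d + 1),
      q ^ ((i:ℤ) * (1 - (i:ℤ))) * ζ i * (q ^ (2*(d:ℤ) - 2) * ((q - q⁻¹) ^ 2)⁻¹) ^ i
        / (qfac 𝕂 q i) ^ 2))) • u := by
  rw [N_pow hq0 he hf L N ψ hL hNψ, Finset.Nat.sum_antidiagonal_eq_sum_range_succ_mk,
    Finset.mul_sum, Finset.mul_sum, Finset.sum_smul]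
  refine Finset.sum_congr rfl fun i hi => ?_
  have hi := Finset.mem_range.1 hi
  obtain ⟨k, rfl⟩ : ∃ k, d = i + k := ⟨d - i, by omega⟩
  rw [Nat.add_sub_cancel_left]
  simp only
  rw [psi_pow R ψ u h, map_smul, hζ i (by omega), smul_smul, smul_smul]
  congr 1
  have hp := prod_acoef hq0 he i k
  have h1 := hf i
  have h2 := hf k
  have hp' := (eq_div_iff h1).2 ((mul_comm _ _).trans hp)
  rw [hp', bcoef]
  have hs : ((-1:𝕂)^k) * (-1)^k = 1 := by rw [← mul_pow]; simp
  have z1 : q ^ (-((k:ℤ) * (i + k - 1))) * q ^ (i*k) = q ^ (-((k:ℤ)*(k-1))) := by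
    rw [← zpow_natCast, ← zpow_add₀ hq0]; congr 1; push_cast; ring
  have z2 : q ^ (((i+k:ℕ):ℤ)*(((i+k:ℕ):ℤ)-1)) * q ^ (2*((i+k:ℕ):ℤ)*(1 - ((i+k:ℕ):ℤ))) *
      q ^ ((i:ℤ) * (1 - (i:ℤ))) * (q ^ (2*((i+k:ℕ):ℤ) - 2)) ^ i = q ^ (-((k:ℤ)*(k-1))) := by
    rw [← zpow_natCast, ← zpow_mul, ← zpow_add₀ hq0, ← zpow_add₀ hq0, ← zpow_add₀ hq0]
    congr 1; push_cast; ring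
  have z3 : (q - q⁻¹) ^ (2*(i+k)) * (((q - q⁻¹) ^ 2)⁻¹) ^ i = (q - q⁻¹) ^ (2*k) := by
    rw [inv_pow, ← pow_mul, mul_add, pow_add, mul_right_comm,
      mul_inv_cancel₀ (pow_ne_zero _ he), one_mul]
  rw [mul_pow]
  set f := qfac 𝕂 q (i+k)
  set fi := qfac 𝕂 q i
  set fk := qfac 𝕂 q k
  calc _ = ((-1)^k * (-1)^k) * (q ^ (-((k:ℤ) * (i + k - 1))) * q ^ (i*k)) *
        (q - q⁻¹) ^ (2*k) * f^2 * ζ i / fi^2 := by field_simp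
    _ = (q ^ (((i+k:ℕ):ℤ)*(((i+k:ℕ):ℤ)-1)) * q ^ (2*((i+k:ℕ):ℤ)*(1 - ((i+k:ℕ):ℤ))) *
      q ^ ((i:ℤ) * (1 - (i:ℤ))) * (q ^ (2*((i+k:ℕ):ℤ) - 2)) ^ i) *
      ((q - q⁻¹) ^ (2*(i+k)) * (((q - q⁻¹) ^ 2)⁻¹) ^ i) * f^2 * ζ i / fi^2 := by
        rw [hs, z1, z2, z3, one_mul]
    _ = _ := by ring

end Expansion

/-! ### Relations between `A`, `A*`, `B` and `K` -/

section Relations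

variable {𝕂 : Type*} [Field 𝕂] {V : Type*} [AddCommGroup V] [Module 𝕂 V]

/-- `q B K⁻¹ - q⁻¹ K⁻¹ B - (q - q⁻¹)`, scaled by `q`. -/
def zOp (q : 𝕂) (B k : Module.End 𝕂 V) : Module.End 𝕂 V :=
  q^2 • (B * k) - k * B - (q^2 - 1) • 1

/-- `A` and `B`, and `K⁻¹` and `A`, are `q`-Weyl pairs; this makes `zOp q B K⁻¹` commute
with `A`. -/
theorem zOp_comm {q : 𝕂} (hq0 : q ≠ 0) {A B k : Module.End 𝕂 V}
    (hBA : ∀ v, B (A v) = q^2 • A (B v) + (1 - q^2) • v)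
    (hkA : ∀ v, k (A v) = (q^2)⁻¹ • A (k v) + (1 - (q^2)⁻¹) • v) (v : V) :
    zOp q B k (A v) = A (zOp q B k v) := by
  simp only [zOp, LinearMap.sub_apply, LinearMap.smul_apply, Module.End.mul_apply,
    Module.End.one_apply, map_add, map_sub, map_smul, hBA, hkA]
  match_scalars <;> field_simp <;> ring

/-- With `R = A - K` and `ψ = B - K`: `ψ R = q² R ψ + (1 - q²)(1 - K²)`. Hence `ψ` lowers the chain
`R^m u`, with the scalars `acoef`. -/
theorem psi_R {q : 𝕂} {A B K : Module.End 𝕂 V}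
    (hBA : ∀ v, B (A v) = q^2 • A (B v) + (1 - q^2) • v)
    (hKA : ∀ v, K (A v) = q^2 • A (K v) + (1 - q^2) • K (K v))
    (hBK : ∀ v, B (K v) = q^2 • K (B v) - (q^2 - 1) • K (K v)) (v : V) :
    (B - K) ((A - K) v) =
      q^2 • (A - K) ((B - K) v) + (1 - q^2) • (v - K (K v)) := by
  simp only [LinearMap.sub_apply, map_sub, hBA, hKA, hBK]
  module

/-- With `S = A*`, `k = K⁻¹`, `N = A* - B - c K⁻¹` and `ψ = B - K`: the summands of `L = N + ψ`
satisfy `N ψ = q² ψ N`. The hypothesis `hkB` is the vanishing of `zOp`. -/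
theorem N_psi {q c : 𝕂} (hq0 : q ≠ 0) {S B K k : Module.End 𝕂 V}
    (hBS : ∀ v, B (S v) = (q^2)⁻¹ • S (B v) + (1 - (q^2)⁻¹) • (B (B v) + c • v))
    (hKS : ∀ v, K (S v) = (q^2)⁻¹ • S (K v) + (1 - (q^2)⁻¹) • (K (K v) + c • v))
    (hBK : ∀ v, B (K v) = q^2 • K (B v) - (q^2 - 1) • K (K v))
    (hkB : ∀ v, k (B v) = q^2 • B (k v) - (q^2 - 1) • v)
    (hKk : ∀ v, K (k v) = v) (hkK : ∀ v, k (K v) = v) (v : V) :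
    (S - B - c • k) ((B - K) v) = q^2 • (B - K) ((S - B - c • k) v) := by
  simp only [LinearMap.sub_apply, LinearMap.smul_apply, map_sub, map_smul, hBS, hKS, hBK, hkB,
    hKk, hkK]
  match_scalars <;> field_simp <;> ring

end Relations


/-! ### The projections on `U_0` -/

theorem stmt_14
    {𝕂 : Type*} [Field 𝕂] [IsAlgClosed 𝕂]
    {V : Type*} [AddCommGroup V] [Module 𝕂 V] [FiniteDimensional 𝕂 V]
    (hV : 0 < Module.finrank 𝕂 V)
    {q : 𝕂} (hq0 : q ≠ 0) (hqru : ∀ n : ℕ, 0 < n → q ^ n ≠ 1)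
    {c : 𝕂} (hc : c ≠ 0)
    (A Astar : Module.End 𝕂 V)
    (d : ℤ) (hd : 0 ≤ d)
    (Vs Vst : ℤ → Submodule 𝕂 V)
    (hVout : ∀ i : ℤ, i < 0 ∨ d < i → Vs i = ⊥)
    (hVstout : ∀ i : ℤ, i < 0 ∨ d < i → Vst i = ⊥)
    (hVeig : ∀ i : ℤ, 0 ≤ i → i ≤ d → Vs i = Module.End.eigenspace A (q ^ (2*i - d)))
    (hVne : ∀ i : ℤ, 0 ≤ i → i ≤ d → Vs i ≠ ⊥)
    (hVtot : (⨆ i ∈ Finset.Icc (0:ℤ) d, Vs i) = ⊤)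
    (hVsteig : ∀ i : ℤ, 0 ≤ i → i ≤ d →
      Vst i = Module.End.eigenspace Astar (q ^ (2*i - d) + c * q ^ (d - 2*i)))
    (hVstne : ∀ i : ℤ, 0 ≤ i → i ≤ d → Vst i ≠ ⊥)
    (hVsttot : (⨆ i ∈ Finset.Icc (0:ℤ) d, Vst i) = ⊤)
    (htd1 : ∀ i : ℤ, Submodule.map Astar (Vs i) ≤ Vs (i-1) ⊔ Vs i ⊔ Vs (i+1))
    (htd2 : ∀ i : ℤ, Submodule.map A (Vst i) ≤ Vst (i-1) ⊔ Vst i ⊔ Vst (i+1))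
    (hirr : ∀ W : Submodule 𝕂 V, Submodule.map A W ≤ W → Submodule.map Astar W ≤ W →
      W = ⊥ ∨ W = ⊤)
    (Us : ℤ → Submodule 𝕂 V)
    (hUout : ∀ i : ℤ, i < 0 ∨ d < i → Us i = ⊥)
    (hUdef : ∀ i : ℤ, 0 ≤ i → i ≤ d →
      Us i = (⨆ j ∈ Finset.Icc (0:ℤ) i, Vst j) ⊓ (⨆ j ∈ Finset.Icc i d, Vs j))
    (hUtot : (⨆ i ∈ Finset.Icc (0:ℤ) d, Us i) = ⊤)
    (K Kinv : Module.End 𝕂 V)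
    (hK : ∀ i : ℤ, 0 ≤ i → i ≤ d → ∀ v ∈ Us i, K v = q ^ (2*i - d) • v)
    (hKinv : ∀ i : ℤ, 0 ≤ i → i ≤ d → ∀ v ∈ Us i, Kinv v = q ^ (d - 2*i) • v)
    (hKKinv : K * Kinv = 1) (hKinvK : Kinv * K = 1)
    (Ws : ℤ → Submodule 𝕂 V)
    (hWout : ∀ i : ℤ, i < 0 ∨ d < i → Ws i = ⊥)
    (hWdef : ∀ i : ℤ, 0 ≤ i → i ≤ d →
      Ws i = (⨆ j ∈ Finset.Icc (0:ℤ) i, Vst j) ⊓ (⨆ j ∈ Finset.Icc (0:ℤ) (d - i), Vs j))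
    (hWtot : (⨆ i ∈ Finset.Icc (0:ℤ) d, Ws i) = ⊤)
    (B : Module.End 𝕂 V)
    (hB : ∀ i : ℤ, 0 ≤ i → i ≤ d → ∀ v ∈ Ws i, B v = q ^ (2*i - d) • v)
    (Fs : ℤ → Module.End 𝕂 V)
    (hFs : ∀ i : ℤ, 0 ≤ i → i ≤ d → (∀ v ∈ Us i, Fs i v = v) ∧
      (∀ j : ℤ, 0 ≤ j → j ≤ d → j ≠ i → ∀ v ∈ Us j, Fs i v = 0))
    (R L : Module.End 𝕂 V)
    (hR : R = A - ∑ h ∈ Finset.Icc (0:ℤ) d, q ^ (2*h - d) • Fs h)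
    (hL : L = Astar - ∑ h ∈ Finset.Icc (0:ℤ) d, (q ^ (2*h - d) + c * q ^ (d - 2*h)) • Fs h)
    (hU0dim : Module.finrank 𝕂 (Us 0) = 1)
    (ζ : ℕ → 𝕂)
    (hζ : ∀ i : ℕ, (i:ℤ) ≤ d → ∀ u ∈ Us 0, (L ^ i * R ^ i) u = ζ i • u)
    (At : Module.End 𝕂 V)
    (hAt : At = c⁻¹ • (Astar - B))
    (Vt : ℤ → Submodule 𝕂 V)
    (hVtout : ∀ i : ℤ, i < 0 ∨ d < i → Vt i = ⊥)
    (hVtdef : ∀ i : ℤ, 0 ≤ i → i ≤ d → Vt i = Module.End.eigenspace At (q ^ (d - 2*i)))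
    (hVttot : (⨆ i ∈ Finset.Icc (0:ℤ) d, Vt i) = ⊤)
    (Ed : Module.End 𝕂 V)
    (hEd : (∀ v ∈ Vs d, Ed v = v) ∧
      (∀ j : ℤ, 0 ≤ j → j ≤ d → j ≠ d → ∀ v ∈ Vs j, Ed v = 0))
    (Et0 : Module.End 𝕂 V)
    (hEt0 : (∀ v ∈ Vt 0, Et0 v = v) ∧
      (∀ j : ℤ, 0 ≤ j → j ≤ d → j ≠ 0 → ∀ v ∈ Vt j, Et0 v = 0))
    :
    ∀ u ∈ Us 0, Et0 (Ed u) =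
      (c ^ (-d) * q ^ (2*d*(1 - d)) *
        (∑ i ∈ Finset.range (d.toNat + 1),
      q ^ ((i:ℤ) * (1 - (i:ℤ))) * ζ i * (q ^ (2*d - 2) * ((q - q⁻¹) ^ 2)⁻¹) ^ i
        / (qfac 𝕂 q i) ^ 2)) • u := by
  have h1 := qsub_ne hq0 hqru 0
  simp only [zero_add, pow_one] at h1
  have hf := qfac_ne hq0 hqru
  have hq2 : q^2 ≠ 1 := hqru 2 (by norm_num)
  have hq2' : q^2 ≠ 0 := pow_ne_zero _ hq0
  obtain ⟨d, rfl⟩ := Int.eq_ofNat_of_zero_le hd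
  -- `θ i = q^(2i-d)`; the exponent `d - 2i` is the inverse.
  set θ : ℤ → 𝕂 := fun i => q ^ (2*i - (d:ℤ)) with hθ
  have hθ0 : ∀ i, θ i ≠ 0 := fun i => zpow_ne_zero _ hq0
  have hθs : ∀ i, θ (i+1) = q^2 * θ i := fun i => by
    simp only [hθ]; rw [← zpow_natCast, ← zpow_add₀ hq0]; congr 1; push_cast; ring
  have hθp : ∀ i, θ (i-1) = (q^2)⁻¹ * θ i := fun i => by
    have := hθs (i-1)
    rw [sub_add_cancel] at this
    rw [this]; field_simp
  have hθi : ∀ i, q ^ ((d:ℤ) - 2*i) = (θ i)⁻¹ := fun i => by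
    simp only [hθ]; rw [← zpow_neg]; congr 1; ring
  have hθne : ∀ i, θ (i+1) ≠ θ i := fun i h => by
    rw [hθs] at h
    exact hq2 (mul_right_cancel₀ (hθ0 i) (h.trans (one_mul _).symm))
  have hθ' : ∀ i, q ^ (2*i - (d:ℤ)) = θ i := fun i => rfl
  simp only [hθ', hθi] at hVeig hVsteig hK hKinv hB hR hL hVtdef
  -- Since the families vanish outside `[0, d]`, every eigenvalue formula holds for all indices.
  have ext0 : ∀ (X : ℤ → Submodule 𝕂 V), (∀ i : ℤ, i < 0 ∨ (d:ℤ) < i → X i = ⊥) →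
      ∀ (T : Module.End 𝕂 V) (μ : ℤ → 𝕂),
      (∀ i : ℤ, 0 ≤ i → i ≤ d → ∀ v ∈ X i, T v = μ i • v) → ∀ i, ∀ v ∈ X i, T v = μ i • v := by
    intro X hX T μ h i v hv
    by_cases hi : 0 ≤ i ∧ i ≤ d
    · exact h i hi.1 hi.2 v hv
    · rw [hX i (by omega), Submodule.mem_bot] at hv
      simp [hv]
  have hK := ext0 Us hUout K θ hK
  have hKi := ext0 Us hUout Kinv (fun i => (θ i)⁻¹) hKinv
  have hB := ext0 Ws hWout B θ hB
  have hA := ext0 Vs hVout A θ (fun i h0 h1 v hv => by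
    rw [hVeig i h0 h1] at hv; exact Module.End.mem_eigenspace_iff.1 hv)
  have hS := ext0 Vst hVstout Astar (fun i => θ i + c * (θ i)⁻¹) (fun i h0 h1 v hv => by
    rw [hVsteig i h0 h1] at hv; exact Module.End.mem_eigenspace_iff.1 hv)
  have hAt' := ext0 Vt hVtout At (fun i => (θ i)⁻¹) (fun i h0 h1 v hv => by
    rw [hVtdef i h0 h1] at hv; exact Module.End.mem_eigenspace_iff.1 hv)
  have hV0 : ∀ i : ℤ, i < 0 → Vs i = ⊥ := fun i h => hVout i (Or.inl h)
  have hVd : ∀ i : ℤ, (d:ℤ) < i → Vs i = ⊥ := fun i h => hVout i (Or.inr h)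
  have hS0 : ∀ i : ℤ, i < 0 → Vst i = ⊥ := fun i h => hVstout i (Or.inl h)
  -- The three flags: `F` ascends through `A*`, `G` and `H` descend through `A`, and
  -- `U_i = F i ⊓ G i`, `W_i = F i ⊓ H i`.
  set F : ℤ → Submodule 𝕂 V := fun i => ⨆ j ∈ Finset.Icc (0:ℤ) i, Vst j with hF
  set G : ℤ → Submodule 𝕂 V := fun i => ⨆ j ∈ Finset.Icc i (d:ℤ), Vs j with hG
  set H : ℤ → Submodule 𝕂 V := fun i => ⨆ j ∈ Finset.Icc (0:ℤ) ((d:ℤ) - i), Vs j with hH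
  have hU : ∀ i, Us i = F i ⊓ G i := by
    intro i
    by_cases hi : 0 ≤ i ∧ i ≤ d
    · exact hUdef i hi.1 hi.2
    · rw [hUout i (by omega)]
      by_cases h0 : i < 0
      · have : F i = ⊥ := sup_empty h0
        rw [this, bot_inf_eq]
      · have : G i = ⊥ := sup_empty (by omega)
        rw [this, inf_bot_eq]
  have hW : ∀ i, Ws i = F i ⊓ H i := by
    intro i
    by_cases hi : 0 ≤ i ∧ i ≤ d
    · exact hWdef i hi.1 hi.2
    · rw [hWout i (by omega)]
      by_cases h0 : i < 0
      · have : F i = ⊥ := sup_empty h0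
        rw [this, bot_inf_eq]
      · have : H i = ⊥ := sup_empty (by omega)
        rw [this, inf_bot_eq]
  have hFm : ∀ i j, i ≤ j → F i ≤ F j := fun i j h => lo_mono hS0 h
  have hGm : ∀ i j, i ≤ j → G j ≤ G i := fun i j h => up_anti hVd h
  have hHm : ∀ i j, i ≤ j → H j ≤ H i := fun i j h => lo_mono hV0 (by omega)
  have hFU := split_flag (fun i => hFm _ _ (by omega)) hGm hU K hK hθne hUtot hFm
  have hFW := split_flag (fun i => hFm _ _ (by omega)) hHm hW B hB hθne hWtot hFm
  -- The raising and lowering action of `A`, `A*` on the two split decompositions.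
  have hAU : ∀ i, ∀ v ∈ Us i, A v - θ i • v ∈ Us (i+1) := by
    intro i v hv
    rw [hU] at hv ⊢
    exact ⟨(F (i+1)).sub_mem (lo_step hS0 A htd2 rfl hv.1)
      (Submodule.smul_mem _ _ (hFm _ _ (by omega) hv.1)), up_drop hVd A hA rfl hv.2⟩
  have hSU : ∀ i, ∀ v ∈ Us i, Astar v - (θ i + c * (θ i)⁻¹) • v ∈ Us (i-1) := by
    intro i v hv
    rw [hU] at hv ⊢
    exact ⟨lo_drop hS0 Astar hS rfl hv.1, (G (i-1)).sub_mem (up_step hVd Astar htd1 rfl hv.2)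
      (Submodule.smul_mem _ _ (hGm _ _ (by omega) hv.2))⟩
  have hAW : ∀ i, ∀ v ∈ Ws i, A v - (θ i)⁻¹ • v ∈ Ws (i+1) := by
    intro i v hv
    rw [hW] at hv ⊢
    refine ⟨(F (i+1)).sub_mem (lo_step hS0 A htd2 rfl hv.1)
      (Submodule.smul_mem _ _ (hFm _ _ (by omega) hv.1)), ?_⟩
    have := lo_drop hV0 A hA (m' := (d:ℤ) - (i+1)) (by omega) hv.2
    have e : θ ((d:ℤ) - i) = (θ i)⁻¹ := by
      rw [← hθi]; simp only [hθ]; congr 1; ring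
    rwa [e] at this
  have hSW : ∀ i, ∀ v ∈ Ws i, Astar v - (θ i + c * (θ i)⁻¹) • v ∈ Ws (i-1) := by
    intro i v hv
    rw [hW] at hv ⊢
    exact ⟨lo_drop hS0 Astar hS rfl hv.1, (H (i-1)).sub_mem
      (lo_step hV0 Astar htd1 (by omega) hv.2)
      (Submodule.smul_mem _ _ (hHm _ _ (by omega) hv.2))⟩
  have hKk : ∀ v, K (Kinv v) = v := fun v => by rw [← Module.End.mul_apply, hKKinv]; rfl
  have hkK : ∀ v, Kinv (K v) = v := fun v => by rw [← Module.End.mul_apply, hKinvK]; rfl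
  -- Each relation below is checked on a single `U_i` or `W_i`, where `A` or `A*` acts as a scalar
  -- plus a shift of the index by one.
  have hBA : ∀ v, B (A v) = q^2 • A (B v) + (1 - q^2) • v := by
    refine fun v => LinearMap.congr_fun (eq_on_sum hWtot (B * A)
      (q^2 • (A * B) + (1 - q^2) • 1) fun i _ v hv => ?_) v
    obtain ⟨w, hw, e⟩ : ∃ w ∈ Ws (i+1), A v = (θ i)⁻¹ • v + w := ⟨_, hAW i v hv, by abel⟩
    simp only [Module.End.mul_apply, LinearMap.add_apply, LinearMap.smul_apply,
      Module.End.one_apply, hB i v hv, map_smul, e, map_add, hB _ w hw, hθs]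
    have := hθ0 i
    match_scalars <;> field_simp <;> ring
  have hBS : ∀ v, B (Astar v) =
      (q^2)⁻¹ • Astar (B v) + (1 - (q^2)⁻¹) • (B (B v) + c • v) := by
    refine fun v => LinearMap.congr_fun (eq_on_sum hWtot (B * Astar)
      ((q^2)⁻¹ • (Astar * B) + (1 - (q^2)⁻¹) • (B * B + c • 1)) fun i _ v hv => ?_) v
    obtain ⟨w, hw, e⟩ : ∃ w ∈ Ws (i-1), Astar v = (θ i + c * (θ i)⁻¹) • v + w :=
      ⟨_, hSW i v hv, by abel⟩
    simp only [Module.End.mul_apply, LinearMap.add_apply, LinearMap.smul_apply,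
      Module.End.one_apply, hB i v hv, map_smul, e, map_add, hB _ w hw, hθp]
    have := hθ0 i
    match_scalars <;> field_simp <;> ring
  have hKA : ∀ v, K (A v) = q^2 • A (K v) + (1 - q^2) • K (K v) := by
    refine fun v => LinearMap.congr_fun (eq_on_sum hUtot (K * A)
      (q^2 • (A * K) + (1 - q^2) • (K * K)) fun i _ v hv => ?_) v
    obtain ⟨w, hw, e⟩ : ∃ w ∈ Us (i+1), A v = θ i • v + w := ⟨_, hAU i v hv, by abel⟩
    simp only [Module.End.mul_apply, LinearMap.add_apply, LinearMap.smul_apply,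
      hK i v hv, map_smul, e, map_add, hK _ w hw, hθs]
    module
  have hkA : ∀ v, Kinv (A v) = (q^2)⁻¹ • A (Kinv v) + (1 - (q^2)⁻¹) • v := by
    refine fun v => LinearMap.congr_fun (eq_on_sum hUtot (Kinv * A)
      ((q^2)⁻¹ • (A * Kinv) + (1 - (q^2)⁻¹) • 1) fun i _ v hv => ?_) v
    obtain ⟨w, hw, e⟩ : ∃ w ∈ Us (i+1), A v = θ i • v + w := ⟨_, hAU i v hv, by abel⟩
    simp only [Module.End.mul_apply, LinearMap.add_apply, LinearMap.smul_apply,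
      Module.End.one_apply, hKi i v hv, map_smul, e, map_add, hKi _ w hw, hθs]
    have := hθ0 i
    match_scalars <;> field_simp <;> ring
  have hKS : ∀ v, K (Astar v) =
      (q^2)⁻¹ • Astar (K v) + (1 - (q^2)⁻¹) • (K (K v) + c • v) := by
    refine fun v => LinearMap.congr_fun (eq_on_sum hUtot (K * Astar)
      ((q^2)⁻¹ • (Astar * K) + (1 - (q^2)⁻¹) • (K * K + c • 1)) fun i _ v hv => ?_) v
    obtain ⟨w, hw, e⟩ : ∃ w ∈ Us (i-1), Astar v = (θ i + c * (θ i)⁻¹) • v + w :=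
      ⟨_, hSU i v hv, by abel⟩
    simp only [Module.End.mul_apply, LinearMap.add_apply, LinearMap.smul_apply,
      Module.End.one_apply, hK i v hv, map_smul, e, map_add, hK _ w hw, hθp]
    have := hθ0 i
    match_scalars <;> field_simp <;> ring
  -- `zOp q B Kinv` preserves each `G i`, because it commutes with `A`, and it maps `U_i` into
  -- `F (i-1)`; by `split_disj` it vanishes.
  have hZ : zOp q B Kinv = 0 := by
    refine eq_on_sum hUtot _ _ fun i _ v hv => ?_
    have hv' := hv
    rw [hU] at hv'
    have hBF : ∀ m, ∀ w ∈ F m, B w - θ m • w ∈ F (m-1) := by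
      intro m w hw
      rw [hFW] at hw ⊢
      exact lo_drop (fun i h => hWout i (Or.inl h)) B hB rfl hw
    have hkF : ∀ m, ∀ w ∈ F m, Kinv w ∈ F m := by
      intro m w hw
      rw [hFU] at hw ⊢
      refine mem_of_gen Kinv (fun j hj x hx => ?_) hw
      rw [hKi j x hx]
      exact Submodule.smul_mem _ _
        (le_lo (fun i h => hUout i (Or.inl h)) (Finset.mem_Icc.1 hj).2 hx)
    have hGz : zOp q B Kinv v ∈ G i := by
      refine mem_of_gen (zOp q B Kinv) (fun j hj x hx => ?_) hv'.2
      have hj := Finset.mem_Icc.1 hj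
      have hjx : 0 ≤ j ∨ x = 0 := by
        by_cases h : 0 ≤ j
        · exact Or.inl h
        · right
          rw [hV0 j (by omega)] at hx
          exact (Submodule.mem_bot 𝕂).1 hx
      rcases hjx with h0 | rfl
      · refine le_up hVd hj.1 ?_
        rw [hVeig j h0 hj.2, Module.End.mem_eigenspace_iff, ← zOp_comm hq0 hBA hkA, hA j x hx,
          map_smul]
      · simp
    have hFz : zOp q B Kinv v ∈ F (i-1) := by
      have hw := hBF i v hv'.1
      set w := B v - θ i • v with hwdef
      have hBv : B v = θ i • v + w := by rw [hwdef]; abel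
      have e : zOp q B Kinv v = (q^2 * (θ i)⁻¹) • w - Kinv w := by
        simp only [zOp, LinearMap.sub_apply, LinearMap.smul_apply, Module.End.mul_apply,
          Module.End.one_apply, hKi i v hv, map_smul, hBv, map_add]
        have := hθ0 i
        match_scalars <;> field_simp <;> ring
      rw [e]
      exact (F (i-1)).sub_mem (Submodule.smul_mem _ _ hw) (hkF _ _ hw)
    refine split_disj (fun i => hFm _ _ (by omega)) (fun i => hGm _ _ (by omega)) hU K hK hθne
      (i := i-1) hFz ?_
    rwa [sub_add_cancel]
  have hkB : ∀ v, Kinv (B v) = q^2 • B (Kinv v) - (q^2 - 1) • v := by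
    intro v
    have := LinearMap.congr_fun hZ v
    simp only [zOp, LinearMap.sub_apply, LinearMap.smul_apply, Module.End.mul_apply,
      Module.End.one_apply, LinearMap.zero_apply] at this
    rw [← sub_eq_zero, ← neg_eq_zero, ← this]
    abel
  have hBK : ∀ v, B (K v) = q^2 • K (B v) - (q^2 - 1) • K (K v) := by
    intro v
    have := congrArg K (hkB (K v))
    rwa [hKk, map_sub, map_smul, map_smul, hkK] at this
  -- `R = A - K`, and `A* = K + c K⁻¹ + L`.
  have hFsum : ∀ μ : ℤ → 𝕂, ∀ i ∈ Finset.Icc (0:ℤ) d, ∀ v ∈ Us i,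
      (∑ h ∈ Finset.Icc (0:ℤ) d, μ h • Fs h) v = μ i • v := by
    intro μ i hi v hv
    have hi' := Finset.mem_Icc.1 hi
    rw [LinearMap.sum_apply, Finset.sum_eq_single_of_mem i hi]
    · rw [LinearMap.smul_apply, (hFs i hi'.1 hi'.2).1 v hv]
    · intro j hj hji
      have hj := Finset.mem_Icc.1 hj
      rw [LinearMap.smul_apply, (hFs j hj.1 hj.2).2 i hi'.1 hi'.2 (Ne.symm hji) v hv, smul_zero]
  have hR' : R = A - K := by
    have e : (∑ h ∈ Finset.Icc (0:ℤ) d, θ h • Fs h) = K :=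
      eq_on_sum hUtot _ K fun i hi v hv => by rw [hFsum _ i hi v hv, hK i v hv]
    rw [hR, e]
  have hL' : L = Astar - (K + c • Kinv) := by
    have e : (∑ h ∈ Finset.Icc (0:ℤ) d, (θ h + c * (θ h)⁻¹) • Fs h) = K + c • Kinv :=
      eq_on_sum hUtot _ _ fun i hi v hv => by
        rw [hFsum (fun h => θ h + c * (θ h)⁻¹) i hi v hv, LinearMap.add_apply,
          LinearMap.smul_apply, hK i v hv, hKi i v hv]
        module
    rw [hL, e]
  set ψ : Module.End 𝕂 V := B - K with hψ
  set N : Module.End 𝕂 V := Astar - B - c • Kinv with hN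
  have hNψ : ∀ v, N (ψ v) = q^2 • ψ (N v) := N_psi hq0 hBS hKS hBK hkB hKk hkK
  have hLN : ∀ v, L v = N v + ψ v := by
    intro v
    simp only [hL', hN, hψ, LinearMap.sub_apply, LinearMap.add_apply, LinearMap.smul_apply]
    abel
  have hkN : ∀ v, Kinv (N v) = q^2 • N (Kinv v) := by
    intro v
    have e : Kinv (Astar v) = q^2 • Astar (Kinv v) - (q^2 - 1) • (v + c • Kinv (Kinv v)) := by
      have := congrArg Kinv (hKS (Kinv v))
      rw [hkK, hKk, map_add, map_smul, map_smul, map_add, map_smul, hkK] at this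
      rw [this]
      match_scalars <;> field_simp <;> ring
    simp only [hN, LinearMap.sub_apply, LinearMap.smul_apply, map_sub, map_smul, e, hkB]
    module
  have hKR : ∀ v, K (R v) = q^2 • R (K v) := by
    intro v
    simp only [hR', LinearMap.sub_apply, map_sub, hKA]
    module
  intro u hu
  have hKRu : ∀ n : ℕ, K ((R ^ n) u) = θ n • (R ^ n) u := by
    intro n
    induction n with
    | zero => simpa using hK 0 u hu
    | succ n ih =>
      rw [pow_succ', Module.End.mul_apply, hKR, ih, map_smul, smul_smul]
      push_cast
      rw [hθs]
  -- `u ∈ U_0 ⊆ F 0 = W_0`, so `B` and `K` agree on `u`.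
  have hψu : ψ u = 0 := by
    rw [hU] at hu
    have h2 := hu.1
    rw [hFW] at h2
    have h3 := lo_drop (fun i h => hWout i (Or.inl h)) B hB (m' := -1) (by norm_num) h2
    have h4 : Finset.Icc (0:ℤ) (-1) = ∅ := Finset.Icc_eq_empty (by omega)
    rw [h4] at h3
    simp only [Finset.notMem_empty, iSup_false, iSup_bot, Submodule.mem_bot] at h3
    rw [hψ, LinearMap.sub_apply, hK 0 u (by rw [hU]; exact hu), h3]
  have hψR : ∀ m : ℕ, ψ ((R ^ (m+1)) u) = acoef q (d:ℤ) (m+1) • (R ^ m) u := by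
    have ez : ∀ n : ℕ, q ^ (2*((n+1:ℕ):ℤ) - 2*(d:ℤ) - 2) = θ n * (q^d)⁻¹ := by
      intro n
      simp only [hθ]
      rw [← zpow_natCast, ← zpow_neg, ← zpow_add₀ hq0]; congr 1; push_cast; ring
    have et : ∀ n : ℕ, θ n = q^(2*n) * (q^d)⁻¹ := by
      intro n
      simp only [hθ]
      rw [← zpow_natCast, ← zpow_natCast, ← zpow_neg, ← zpow_add₀ hq0]; congr 1
    have hqd : q^d ≠ 0 := pow_ne_zero _ hq0
    intro m
    have key := fun v => psi_R hBA hKA hBK v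
    rw [← hR', ← hψ] at key
    induction m with
    | zero =>
      rw [pow_succ', Module.End.mul_apply, key, hKRu, map_smul, hKRu]
      simp only [pow_zero, Module.End.one_apply, hψu, map_zero, smul_zero, zero_add]
      simp only [acoef, mul_one]
      have e := ez 0
      simp only [zero_add] at e
      rw [e, et 0]
      module
    | succ m ih =>
      rw [pow_succ', Module.End.mul_apply, key, hKRu, map_smul, hKRu, ih, map_smul,
        ← Module.End.mul_apply, ← pow_succ']
      simp only [acoef, ez, et]
      match_scalars <;> field_simp <;> ring
  have hNR := NR_pow hq0 h1 hf R L N ψ hLN hNψ d u hψR ζ (fun i hi => by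
    rw [← Module.End.mul_apply]; exact hζ i (by exact_mod_cast hi) u hu)
  have hAtv : ∀ v, At v = Kinv v + c⁻¹ • N v := by
    intro v
    simp only [hAt, hN, LinearMap.sub_apply, LinearMap.smul_apply]
    match_scalars <;> field_simp <;> ring
  -- `proj_chain` is indexed by `ℕ`, the eigenspace families by `ℤ`.
  have nat_ext : ∀ (X : ℤ → Submodule 𝕂 V), (⨆ i ∈ Finset.Icc (0:ℤ) d, X i) = ⊤ →
      ∀ f g : Module.End 𝕂 V, (∀ i : ℤ, 0 ≤ i → i ≤ d → ∀ v ∈ X i, f v = g v) → f = g :=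
    fun X hX f g h => eq_on_sum hX f g fun i hi =>
      h i (Finset.mem_Icc.1 hi).1 (Finset.mem_Icc.1 hi).2
  have hEu := proj_chain A Ed (fun n : ℕ => θ n) (d := d) (fun n : ℕ => Vs n)
    (fun f g h => nat_ext Vs hVtot f g fun i h0 h1 v hv => by
      lift i to ℕ using h0
      exact h i (by exact_mod_cast h1) v hv)
    (fun j _ v hv => hA j v hv) hEd.1
    (fun j hj v hv => hEd.2 j (by omega) (by omega) (by omega) v hv)
    (fun n => (R ^ n) u) (fun n => by
      rw [pow_succ', Module.End.mul_apply, ← hKRu, hR', LinearMap.sub_apply]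
      abel)
  -- The eigenspaces of `Ã*` are listed from `d` down to `0`, so that the eigenvalue list is again
  -- `θ 0, …, θ d`; the chain is `c⁻ⁿ Nⁿ Rᵈ u`, of `K⁻¹`-weight `θ n`.
  have hkx : ∀ n : ℕ, Kinv ((N ^ n) ((R ^ d) u)) = θ n • (N ^ n) ((R ^ d) u) := by
    intro n
    induction n with
    | zero =>
      have e : θ d * θ ((0:ℕ):ℤ) = 1 := by
        simp only [hθ]
        rw [← zpow_add₀ hq0]; convert zpow_zero q using 2; push_cast; ring
      have := congrArg Kinv (hKRu d)
      rw [hkK, map_smul] at this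
      simp only [pow_zero, Module.End.one_apply]
      rw [this, smul_smul, mul_comm, ← this, e, one_smul]
    | succ n ih =>
      rw [pow_succ', Module.End.mul_apply, hkN, ih, map_smul, smul_smul]
      push_cast
      rw [hθs]
  have hEtu := proj_chain At Et0 (fun n : ℕ => θ n) (d := d) (fun n : ℕ => Vt ((d:ℤ) - n))
    (fun f g h => nat_ext Vt hVttot f g fun i h0 h1 v hv => by
      lift i to ℕ using h0
      have h1 : i ≤ d := by exact_mod_cast h1
      refine h (d - i) (by omega) v ?_
      have : (d:ℤ) - ((d - i : ℕ) : ℤ) = i := by omega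
      rwa [this])
    (fun j _ v hv => by
      rw [hAt' _ v hv, ← hθi]; simp only [hθ]; congr 2; ring)
    (fun v hv => hEt0.1 v (by simpa using hv))
    (fun j hj v hv => hEt0.2 _ (by omega) (by omega) (by omega) v hv)
    (fun n => (c⁻¹) ^ n • (N ^ n) ((R ^ d) u)) (fun n => by
      rw [map_smul, hAtv, hkx, pow_succ' N, Module.End.mul_apply]
      module)
  simp only [pow_zero, one_smul, Module.End.one_apply] at hEtu hEu
  -- The two eigenvalue lists agree, so both projections carry the same denominator `D`.
  have hden := denom_sq hq0 h1 d
  set D := ∏ j ∈ Finset.range d, (θ d - θ j) with hD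
  have hden' : D ^ 2 = q ^ ((d:ℤ)*(d-1)) * (q - q⁻¹) ^ (2*d) * (qfac 𝕂 q d) ^ 2 := hden
  have hD0 : D ^ 2 ≠ 0 := by
    rw [hden']
    exact mul_ne_zero (mul_ne_zero (zpow_ne_zero _ hq0) (pow_ne_zero _ h1)) (pow_ne_zero _ (hf d))
  have htot : D ^ 2 • Et0 (Ed u) = (c⁻¹) ^ d • (N ^ d) ((R ^ d) u) := by
    rw [← hEtu, ← hEu, map_smul, smul_smul, sq]
  rw [hNR, ← hden'] at htot
  have hfin := congrArg (fun v => (D ^ 2)⁻¹ • v) htot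
  simp only [smul_smul] at hfin
  rw [inv_mul_cancel₀ hD0, one_smul] at hfin
  rw [hfin, Int.toNat_natCast, zpow_neg, zpow_natCast, ← inv_pow c]
  congr 1
  rw [mul_left_comm (c⁻¹ ^ d), inv_mul_cancel_left₀ hD0]; ring
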